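/- For all a, b, c ∈ {-2,-1,0,1}, the Weyl group W acts transitively on the set {(e1,e2,e3) ∈ E³ : e1·e2 = a, e2·e3 = b, e1·e3 = c} whenever it is nonempty; that is, for any two triples (e1,e2,e3), (f1,f2,f3) of roots with e1·e2 = f1·f2 = a, e2·e3 = f2·f3 = b and e1·e3 = f1·f3 = c, there exists w ∈ W with w(e_i) = f_i for i = 1,2,3. -/

import Mathlib

noncomputable section

/-- The standard dot product on ℝ^8. -/
def dot (a b : Fin 8 → ℝ) : ℝ := ∑ i, a i * b i

/-- Membership in the E8 lattice Λ: all coordinates are integers or all lie in ℤ + 1/2,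
and the coordinates sum to an even integer. -/
def inLambda (a : Fin 8 → ℝ) : Prop :=
  ((∀ i, ∃ n : ℤ, a i = n) ∨ (∀ i, ∃ n : ℤ, a i = n + 1 / 2)) ∧
    ∃ n : ℤ, (∑ i, a i) = 2 * n

/-- The E8 root system E: lattice vectors of squared norm 2. -/
def isRoot (a : Fin 8 → ℝ) : Prop := inLambda a ∧ dot a a = 2

/-- The Weyl group W: linear isometries of ℝ^8 mapping the root system E onto itself. -/
def IsWeyl (w : (Fin 8 → ℝ) ≃ₗ[ℝ] (Fin 8 → ℝ)) : Prop :=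
  (∀ a b : Fin 8 → ℝ, dot (w a) (w b) = dot a b) ∧
    (⇑w '' {a | isRoot a} = {a | isRoot a})

/-!
It suffices to move a root `f` to a root `g` by an element of the Weyl group fixing a set `S` of
at most two roots, whenever `f` and `g` have the same products with the elements of `S`: the
entries of a triple can then be moved one after the other.

If `f ⬝ᵥ g = 1`, the reflection in the root `f - g` does this, so it is enough to link `f` and `g`
by a chain of such steps. If `f ⬝ᵥ g = 0`, then `f - g` has squared norm 4. The element of its
Weyl orbit with the largest first coordinate is `2ε₀`. After this change of coordinates `f` and the
elements of `S` have integral first coordinate, hence at most two nonzero coordinates each, so some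
coordinate `j ≠ 0` vanishes on all of them and on `g`; then `s = ε₀ + ε_j` is orthogonal to `S` with
`s ⬝ᵥ f = 1` and `s ⬝ᵥ g = -1`, and `f - s`, the reflection of `f` in `s`, is one step away from
`g`. If `f ⬝ᵥ g = -2`, then `f = -g` is orthogonal to `S` and the reflection in `f` works.

If `f ⬝ᵥ g = -1` and `f` is orthogonal to `S`, then `f + g` links `f` to `g`. Otherwise `f + g` is,
up to sign, every element of `S` not orthogonal to `f`, so the negative of the reflection in `f + g`
fixes these elements and moves `f` to `g`. It negates an element of `S` orthogonal to `f`, which the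
reflection in that element repairs.
-/

section Reflection

variable {ι R : Type*} [Fintype ι] [CommRing R] {s : ι → R}

/-- The reflection `y ↦ y - (s ⬝ᵥ y) • s` in the hyperplane orthogonal to a vector `s` that is
normalised by `s ⬝ᵥ s = 2`, as roots are. -/
def dotReflection (s : ι → R) (hs : s ⬝ᵥ s = 2) : (ι → R) ≃ₗ[R] (ι → R) :=
  Module.reflection (f := dotProductBilin R R s) hs

theorem dotReflection_apply (hs : s ⬝ᵥ s = 2) (y : ι → R) :
    dotReflection s hs y = y - (s ⬝ᵥ y) • s := rfl

theorem dotReflection_involutive (hs : s ⬝ᵥ s = 2) : Function.Involutive (dotReflection s hs) :=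
  Module.involutive_reflection hs

theorem dotReflection_apply_of_dotProduct_eq_zero (hs : s ⬝ᵥ s = 2) {y : ι → R}
    (h : s ⬝ᵥ y = 0) : dotReflection s hs y = y := by
  rw [dotReflection_apply, h, zero_smul, sub_zero]

theorem dotReflection_dotProduct_dotReflection (hs : s ⬝ᵥ s = 2) (x y : ι → R) :
    dotReflection s hs x ⬝ᵥ dotReflection s hs y = x ⬝ᵥ y := by
  simp only [dotReflection_apply, sub_dotProduct, dotProduct_sub, smul_dotProduct,
    dotProduct_smul, smul_eq_mul, hs, dotProduct_comm x s]
  ring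

end Reflection

section Lattice

variable {x y : Fin 8 → ℝ}

/-- The E8 lattice Λ as an additive subgroup of `ℝ⁸`. -/
def e8Lattice : AddSubgroup (Fin 8 → ℝ) where
  carrier := {x | inLambda x}
  zero_mem' := ⟨.inl fun _ ↦ ⟨0, by simp⟩, 0, by simp⟩
  add_mem' := by
    rintro x y ⟨hx, k, hk⟩ ⟨hy, l, hl⟩
    refine ⟨?_, k + l, by simp only [Pi.add_apply, Finset.sum_add_distrib, hk, hl]; push_cast; ring⟩
    rcases hx with hx | hx <;> rcases hy with hy | hy <;> choose m hm using hx <;>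
      choose n hn using hy
    · exact .inl fun i ↦ ⟨m i + n i, by rw [Pi.add_apply, hm, hn]; push_cast; ring⟩
    · exact .inr fun i ↦ ⟨m i + n i, by rw [Pi.add_apply, hm, hn]; push_cast; ring⟩
    · exact .inr fun i ↦ ⟨m i + n i, by rw [Pi.add_apply, hm, hn]; push_cast; ring⟩
    · exact .inl fun i ↦ ⟨m i + n i + 1, by rw [Pi.add_apply, hm, hn]; push_cast; ring⟩
  neg_mem' := by
    rintro x ⟨hx, k, hk⟩
    refine ⟨?_, -k, by simp [hk]⟩
    rcases hx with hx | hx <;> choose m hm using hx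
    · exact .inl fun i ↦ ⟨-m i, by simp [hm]⟩
    · exact .inr fun i ↦ ⟨-m i - 1, by rw [Pi.neg_apply, hm]; push_cast; ring⟩

theorem exists_int_dotProduct_of_mem_e8Lattice (hx : x ∈ e8Lattice) (hy : y ∈ e8Lattice) :
    ∃ n : ℤ, x ⬝ᵥ y = n := by
  obtain ⟨hx, k, hk⟩ := hx
  obtain ⟨hy | hy, l, hl⟩ := hy <;> choose m hm using hy
  · rcases hx with hx | hx <;> choose n hn using hx
    · exact ⟨∑ i, n i * m i, by simp [dotProduct, hn, hm]⟩
    · refine ⟨∑ i, n i * m i + l, ?_⟩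
      simp only [hm] at hl
      simp only [dotProduct, hn, hm, add_mul, Finset.sum_add_distrib, ← Finset.mul_sum, hl]
      push_cast
      ring
  · rcases hx with hx | hx <;> choose n hn using hx
    · refine ⟨∑ i, n i * m i + k, ?_⟩
      simp only [hn] at hk
      simp only [dotProduct, hn, hm, mul_add, Finset.sum_add_distrib, ← Finset.sum_mul, hk]
      push_cast
      ring
    · refine ⟨∑ i, n i * m i + k + l - 2, ?_⟩
      simp only [hn, Finset.sum_add_distrib, Finset.sum_const, Finset.card_univ,
        Fintype.card_fin, nsmul_eq_mul] at hk
      simp only [hm, Finset.sum_add_distrib, Finset.sum_const, Finset.card_univ,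
        Fintype.card_fin, nsmul_eq_mul] at hl
      simp only [dotProduct, hn, hm, mul_add, add_mul, Finset.sum_add_distrib, ← Finset.sum_mul,
        ← Finset.mul_sum, Finset.sum_const, Finset.card_univ, Fintype.card_fin, nsmul_eq_mul]
      push_cast at hk hl ⊢
      linarith

theorem exists_int_two_mul_apply_of_mem_e8Lattice (hx : x ∈ e8Lattice) (i : Fin 8) :
    ∃ n : ℤ, 2 * x i = n := by
  obtain ⟨hx | hx, -⟩ := hx <;> obtain ⟨n, hn⟩ := hx i
  · exact ⟨2 * n, by simp [hn]⟩
  · exact ⟨2 * n + 1, by rw [hn]; push_cast; ring⟩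

end Lattice

section Roots

variable {s x y : Fin 8 → ℝ}

theorem isRoot_iff : isRoot x ↔ x ∈ e8Lattice ∧ x ⬝ᵥ x = 2 := Iff.rfl

theorem isRoot.mem_e8Lattice (hx : isRoot x) : x ∈ e8Lattice := hx.1

theorem isRoot.dotProduct_self (hx : isRoot x) : x ⬝ᵥ x = 2 := hx.2

theorem isRoot.neg (hx : isRoot x) : isRoot (-x) :=
  isRoot_iff.2 ⟨neg_mem hx.mem_e8Lattice, by
    rw [neg_dotProduct_neg, hx.dotProduct_self]⟩

theorem isRoot.dotReflection (hs : isRoot s) (hx : isRoot x) :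
    isRoot (dotReflection s hs.dotProduct_self x) := by
  obtain ⟨n, hn⟩ := exists_int_dotProduct_of_mem_e8Lattice hs.mem_e8Lattice hx.mem_e8Lattice
  refine isRoot_iff.2 ⟨?_, by
    rw [dotReflection_dotProduct_dotReflection, hx.dotProduct_self]⟩
  rw [dotReflection_apply, hn, Int.cast_smul_eq_zsmul]
  exact sub_mem hx.mem_e8Lattice (zsmul_mem hs.mem_e8Lattice n)

theorem isRoot.sub (hx : isRoot x) (hy : isRoot y) (h : x ⬝ᵥ y = 1) : isRoot (x - y) := by
  refine isRoot_iff.2 ⟨sub_mem hx.mem_e8Lattice hy.mem_e8Lattice, ?_⟩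
  rw [sub_dotProduct, dotProduct_sub, dotProduct_sub, dotProduct_comm y x, h, hx.dotProduct_self,
    hy.dotProduct_self]
  norm_num

theorem isRoot.add (hx : isRoot x) (hy : isRoot y) (h : x ⬝ᵥ y = -1) : isRoot (x + y) := by
  rw [← sub_neg_eq_add]
  exact hx.sub hy.neg (by rw [dotProduct_neg, h, neg_neg])

theorem isRoot.dotProduct_le_two (hx : isRoot x) (hy : isRoot y) : x ⬝ᵥ y ≤ 2 := by
  have h : 0 ≤ (x - y) ⬝ᵥ (x - y) := dotProduct_self_star_nonneg (x - y)
  rw [sub_dotProduct, dotProduct_sub, dotProduct_sub, dotProduct_comm y x, hx.dotProduct_self,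
    hy.dotProduct_self] at h
  linarith

theorem isRoot.eq_of_dotProduct_eq_two (hx : isRoot x) (hy : isRoot y) (h : x ⬝ᵥ y = 2) :
    x = y := by
  rw [← sub_eq_zero, ← dotProduct_self_eq_zero, sub_dotProduct, dotProduct_sub, dotProduct_sub,
    dotProduct_comm y x, h, hx.dotProduct_self, hy.dotProduct_self]
  norm_num

theorem isRoot.eq_neg_of_dotProduct_eq_neg_two (hx : isRoot x) (hy : isRoot y)
    (h : x ⬝ᵥ y = -2) : x = -y :=
  hx.eq_of_dotProduct_eq_two hy.neg (by rw [dotProduct_neg, h, neg_neg])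

theorem isRoot.dotProduct_mem (hx : isRoot x) (hy : isRoot y) :
    x ⬝ᵥ y ∈ ({-2, -1, 0, 1, 2} : Set ℝ) := by
  obtain ⟨n, hn⟩ := exists_int_dotProduct_of_mem_e8Lattice hx.mem_e8Lattice hy.mem_e8Lattice
  have h_upper := hx.dotProduct_le_two hy
  have h_lower := hx.dotProduct_le_two hy.neg
  rw [dotProduct_neg] at h_lower
  rw [hn] at h_upper h_lower ⊢
  have h_le : n ≤ 2 := by exact_mod_cast h_upper
  have h_ge : -2 ≤ n := by
    have : -n ≤ 2 := by exact_mod_cast h_lower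
    linarith
  interval_cases n <;> simp

theorem isRoot_single_add_single {i j : Fin 8} (hij : i ≠ j) :
    isRoot (Pi.single i 1 + Pi.single j 1) := by
  refine isRoot_iff.2 ⟨⟨.inl fun k ↦ ?_, 1, ?_⟩, ?_⟩
  · exact ⟨(Pi.single i 1 + Pi.single j 1 : Fin 8 → ℤ) k, by simp [Pi.single_apply]⟩
  · simp [Finset.sum_add_distrib, one_add_one_eq_two]
  · simp [hij, hij.symm, one_add_one_eq_two]

theorem exists_int_eq_add_half_of_abs_eq_half {t : ℝ} (ht : |t| = 1 / 2) :
    ∃ n : ℤ, t = n + 1 / 2 := by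
  rcases eq_or_eq_neg_of_abs_eq ht with rfl | rfl
  · exact ⟨0, by simp⟩
  · exact ⟨-1, by norm_num⟩

theorem isRoot_of_abs_eq_half (hx : ∀ i, |x i| = 1 / 2) (h_even : ∃ n : ℤ, ∑ i, x i = 2 * n) :
    isRoot x := by
  refine isRoot_iff.2
    ⟨⟨.inr fun i ↦ exists_int_eq_add_half_of_abs_eq_half (hx i), h_even⟩, ?_⟩
  have h_sq (i) : x i * x i = 1 / 4 := by rw [← abs_mul_abs_self, hx]; norm_num
  simp only [dotProduct, h_sq, Finset.sum_const, Finset.card_univ, Fintype.card_fin]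
  norm_num

theorem exists_isRoot_eqOn_compl_singleton (hx : ∀ i, |x i| = 1 / 2) (j : Fin 8) :
    ∃ r, isRoot r ∧ (∀ i ≠ j, r i = x i) ∧ |r j| = 1 / 2 := by
  choose n hn using fun i ↦ exists_int_eq_add_half_of_abs_eq_half (hx i)
  have h_sum : ∑ i, x i = (∑ i, n i + 4 : ℤ) := by
    simp only [hn, Finset.sum_add_distrib, Finset.sum_const, Finset.card_univ, Fintype.card_fin]
    norm_num
  obtain ⟨k, hk⟩ | ⟨k, hk⟩ := Int.even_or_odd (∑ i, n i + 4)
  · exact ⟨x, isRoot_of_abs_eq_half hx ⟨k, by rw [h_sum, hk]; push_cast; ring⟩, fun _ _ ↦ rfl, hx j⟩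
  · refine ⟨Function.update x j (-x j), isRoot_of_abs_eq_half (fun i ↦ ?_) ⟨k - n j, ?_⟩,
      fun i hi ↦ Function.update_of_ne hi _ _, by simp [hx]⟩
    · obtain rfl | hi := eq_or_ne i j
      · simp [hx]
      · simp [hx, hi]
    · have h_update := Finset.sum_update_of_mem (Finset.mem_univ j) x (-x j)
      have h_split := Finset.sum_sdiff (f := x) (Finset.subset_univ {j})
      rw [Finset.sum_singleton, h_sum, hk] at h_split
      rw [h_update]
      push_cast at h_split ⊢
      linarith [hn j]

end Roots

section WeylGroup

variable {s x : Fin 8 → ℝ} {w : (Fin 8 → ℝ) ≃ₗ[ℝ] (Fin 8 → ℝ)}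

/-- The Weyl group W of E8 as a subgroup of the general linear group of `ℝ⁸`. -/
def weylGroup : Subgroup ((Fin 8 → ℝ) ≃ₗ[ℝ] (Fin 8 → ℝ)) where
  carrier := {w | IsWeyl w}
  one_mem' := ⟨fun _ _ ↦ rfl, Set.image_id _⟩
  mul_mem' := by
    rintro u w ⟨hu, hu_roots⟩ ⟨hw, hw_roots⟩
    refine ⟨fun x y ↦ (hu _ _).trans (hw x y), ?_⟩
    change (u ∘ w) '' _ = _
    rw [Set.image_comp, hw_roots, hu_roots]
  inv_mem' := by
    rintro w ⟨hw, hw_roots⟩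
    refine ⟨fun x y ↦ ?_, ?_⟩
    · rw [← hw, LinearEquiv.coe_inv, LinearEquiv.apply_symm_apply, LinearEquiv.apply_symm_apply]
    · rw [LinearEquiv.coe_inv, LinearEquiv.image_symm_eq_preimage]
      nth_rw 1 [← hw_roots]
      exact Set.preimage_image_eq _ w.injective

theorem dotProduct_apply_of_mem_weylGroup (hw : w ∈ weylGroup) (x y : Fin 8 → ℝ) :
    w x ⬝ᵥ w y = x ⬝ᵥ y := hw.1 x y

theorem isRoot_apply_of_mem_weylGroup (hw : w ∈ weylGroup) (hx : isRoot x) : isRoot (w x) :=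
  hw.2.subset (Set.mem_image_of_mem w hx)

theorem mem_weylGroup_of_involutive (hw : Function.Involutive w)
    (h_isometry : ∀ x y, w x ⬝ᵥ w y = x ⬝ᵥ y) (h_roots : ∀ x, isRoot x → isRoot (w x)) :
    w ∈ weylGroup := by
  refine ⟨h_isometry, ?_⟩
  rw [hw.image_eq_preimage_symm]
  exact Set.Subset.antisymm (fun x hx ↦ hw x ▸ h_roots _ hx) h_roots

theorem isRoot.dotReflection_mem_weylGroup (hs : isRoot s) :
    _root_.dotReflection s hs.dotProduct_self ∈ weylGroup :=
  mem_weylGroup_of_involutive (dotReflection_involutive _)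
    (dotReflection_dotProduct_dotReflection _) fun _ ↦ hs.dotReflection

theorem neg_mem_weylGroup : LinearEquiv.neg ℝ ∈ weylGroup :=
  mem_weylGroup_of_involutive neg_neg neg_dotProduct_neg fun _ ↦ isRoot.neg

end WeylGroup

section NormFour

variable {p q x : Fin 8 → ℝ}

theorem exists_isRoot_two_mul_dotProduct_le (x : Fin 8 → ℝ) {j : Fin 8} (hj : j ≠ 0) :
    ∃ r, isRoot r ∧ r 0 = 1 / 2 ∧ 2 * (r ⬝ᵥ x) ≤ x 0 + |x j| - ∑ i ∈ {0, j}ᶜ, |x i| := by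
  let σ : Fin 8 → ℝ := fun i ↦ if i = 0 then 1 / 2 else if 0 ≤ x i then -(1 / 2) else 1 / 2
  have hσ (i) : |σ i| = 1 / 2 := by
    simp only [σ]
    split_ifs <;> norm_num [abs_of_pos]
  obtain ⟨r, hr, h_eq, hrj⟩ := exists_isRoot_eqOn_compl_singleton hσ j
  have hr0 : r 0 = 1 / 2 := h_eq 0 hj.symm
  refine ⟨r, hr, hr0, ?_⟩
  have h_rest : ∀ i ∈ ({0, j}ᶜ : Finset (Fin 8)), r i * x i = -(1 / 2) * |x i| := by
    intro i hi
    simp only [Finset.mem_compl, Finset.mem_insert, Finset.mem_singleton, not_or] at hi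
    simp only [h_eq i hi.2, σ, if_neg hi.1]
    split_ifs with h_sign
    · rw [abs_of_nonneg h_sign]
    · rw [abs_of_neg (not_le.1 h_sign)]
      ring
  have h_j : r j * x j ≤ 1 / 2 * |x j| := by
    rw [← hrj, ← abs_mul]
    exact le_abs_self _
  rw [dotProduct, ← Finset.sum_add_sum_compl {0, j}, Finset.sum_pair hj.symm,
    Finset.sum_congr rfl h_rest, ← Finset.mul_sum, hr0]
  linarith

theorem exists_int_of_sum_abs_le (hx : x ∈ e8Lattice) (h_norm : x ⬝ᵥ x = 4)
    (h_sum : ∑ i ∈ {0, 1}ᶜ, |x i| ≤ x 0 + |x 1|) : ∀ i, ∃ n : ℤ, x i = n := by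
  refine hx.1.resolve_right fun h_half ↦ ?_
  have h_abs (i) : 1 / 2 ≤ |x i| := by
    obtain ⟨n, hn⟩ := h_half i
    have h_odd : 1 ≤ |2 * n + 1| := Int.one_le_abs (by lia)
    have h_cast : |2 * x i| = (|2 * n + 1| : ℤ) := by rw [hn]; push_cast; ring_nf
    rw [abs_mul, abs_two] at h_cast
    have : (1 : ℝ) ≤ (|2 * n + 1| : ℤ) := by exact_mod_cast h_odd
    linarith
  have h_card : ({0, 1}ᶜ : Finset (Fin 8)).card = 6 := rfl
  have h_coords : 3 ≤ x 0 + |x 1| :=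
    calc (3 : ℝ) = ({0, 1}ᶜ : Finset (Fin 8)).card • (1 / 2 : ℝ) := by rw [h_card]; norm_num
      _ ≤ ∑ i ∈ {0, 1}ᶜ, |x i| := Finset.card_nsmul_le_sum _ _ _ fun i _ ↦ h_abs i
      _ ≤ x 0 + |x 1| := h_sum
  have h_rest : 3 / 2 ≤ ∑ i ∈ {0, 1}ᶜ, x i * x i :=
    calc (3 / 2 : ℝ) = ({0, 1}ᶜ : Finset (Fin 8)).card • (1 / 4 : ℝ) := by rw [h_card]; norm_num
      _ ≤ ∑ i ∈ {0, 1}ᶜ, x i * x i := Finset.card_nsmul_le_sum _ _ _ fun i _ ↦ by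
        rw [← abs_mul_abs_self]
        nlinarith [h_abs i]
  rw [dotProduct, ← Finset.sum_add_sum_compl {0, 1}, Finset.sum_pair (by decide)] at h_norm
  nlinarith [abs_mul_abs_self (x 1), sq_nonneg (x 0 - |x 1|)]

theorem card_support_le_dotProduct_self {ι : Type*} [Fintype ι] {x : ι → ℝ}
    (h_int : ∀ i, ∃ n : ℤ, x i = n) : (Finset.card {i | x i ≠ 0} : ℝ) ≤ x ⬝ᵥ x := by
  have h_one_le (i) (hi : x i ≠ 0) : 1 ≤ x i * x i := by
    obtain ⟨n, hn⟩ := h_int i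
    rw [hn] at hi ⊢
    exact_mod_cast Int.add_one_le_of_lt (mul_self_pos.2 (Int.cast_ne_zero.1 hi))
  calc (Finset.card {i | x i ≠ 0} : ℝ) = ∑ i with x i ≠ 0, 1 := by simp
    _ ≤ ∑ i with x i ≠ 0, x i * x i :=
        Finset.sum_le_sum fun i hi ↦ h_one_le i (Finset.mem_filter.1 hi).2
    _ ≤ x ⬝ᵥ x := Finset.sum_le_univ_sum_of_nonneg fun i ↦ mul_self_nonneg (x i)

theorem exists_ne_zero_apply_eq_zero (h_int : ∀ i, ∃ n : ℤ, x i = n) (h_norm : x ⬝ᵥ x = 4) :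
    ∃ j ≠ 0, x j = 0 := by
  have h_card : Finset.card {i | x i ≠ 0} ≤ 4 := by
    exact_mod_cast (card_support_le_dotProduct_self h_int).trans_eq h_norm
  by_contra! h_ne
  have h_subset : ({0}ᶜ : Finset (Fin 8)) ⊆ ({i | x i ≠ 0} : Finset (Fin 8)) := fun i hi ↦ by
    simpa using h_ne i (by simpa using hi)
  have h_seven : ({0}ᶜ : Finset (Fin 8)).card = 7 := rfl
  have h_le := Finset.card_le_card h_subset
  lia

theorem apply_zero_eq_two_of_sum_abs_le (hx : x ∈ e8Lattice) (h_norm : x ⬝ᵥ x = 4)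
    (h_sum : ∀ j ≠ 0, ∑ i ∈ {0, j}ᶜ, |x i| ≤ x 0 + |x j|) : x 0 = 2 := by
  have h_int := exists_int_of_sum_abs_le hx h_norm (h_sum 1 (by decide))
  obtain ⟨j, hj, hxj⟩ := exists_ne_zero_apply_eq_zero h_int h_norm
  obtain ⟨n, hn⟩ := h_int 0
  have h_le : ∑ i ∈ {0, j}ᶜ, |x i| ≤ x 0 := by simpa [hxj] using h_sum j hj
  have h_nonneg : 0 ≤ ∑ i ∈ {0, j}ᶜ, |x i| := Finset.sum_nonneg fun i _ ↦ abs_nonneg _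
  have h_sq : ∑ i ∈ {0, j}ᶜ, x i * x i ≤ (∑ i ∈ {0, j}ᶜ, |x i|) ^ 2 := by
    simpa only [sq_abs, ← sq] using
      Finset.sum_sq_le_sq_sum_of_nonneg (s := {0, j}ᶜ) fun i _ ↦ abs_nonneg (x i)
  have h_sq_nonneg : 0 ≤ ∑ i ∈ {0, j}ᶜ, x i * x i := Finset.sum_nonneg fun i _ ↦ mul_self_nonneg _
  rw [dotProduct, ← Finset.sum_add_sum_compl {0, j}, Finset.sum_pair hj.symm, hxj] at h_norm
  have h_two_le : 2 ≤ x 0 ^ 2 := by nlinarith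
  have h_le_four : x 0 ^ 2 ≤ 4 := by nlinarith
  have h_nonneg' : 0 ≤ x 0 := h_nonneg.trans h_le
  rw [hn] at h_two_le h_le_four h_nonneg' ⊢
  norm_cast at h_two_le h_le_four h_nonneg' ⊢
  have : n ≤ 2 := by nlinarith
  interval_cases n <;> simp_all

theorem eq_single_of_forall_isRoot (hx : x ∈ e8Lattice) (h_norm : x ⬝ᵥ x = 4)
    (h_dominant : ∀ r, isRoot r → 0 < r 0 → 0 ≤ r ⬝ᵥ x) : x = Pi.single 0 2 := by
  have hx0 : x 0 = 2 := by
    refine apply_zero_eq_two_of_sum_abs_le hx h_norm fun j hj ↦ ?_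
    obtain ⟨r, hr, hr0, h_le⟩ := exists_isRoot_two_mul_dotProduct_le x hj
    linarith [h_dominant r hr (by rw [hr0]; norm_num)]
  rw [← sub_eq_zero, ← dotProduct_self_eq_zero, sub_dotProduct, dotProduct_sub, dotProduct_sub,
    h_norm, dotProduct_single, single_dotProduct, single_dotProduct, Pi.single_eq_same, hx0]
  norm_num

theorem exists_mem_weylGroup_forall_apply_le {d : Fin 8 → ℝ}
    (hd : ∀ u ∈ weylGroup, u d ∈ e8Lattice) (i : Fin 8) :
    ∃ w ∈ weylGroup, ∀ u ∈ weylGroup, u d i ≤ w d i := by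
  have h_int (u) (hu : u ∈ weylGroup) : ∃ n : ℤ, 2 * u d i = n :=
    exists_int_two_mul_apply_of_mem_e8Lattice (hd u hu) i
  have h_bound (u) (hu : u ∈ weylGroup) : 2 * u d i ≤ d ⬝ᵥ d + 1 := by
    have h_sq : u d i * u d i ≤ u d ⬝ᵥ u d :=
      Finset.single_le_sum (fun k _ ↦ mul_self_nonneg (u d k)) (Finset.mem_univ i)
    rw [dotProduct_apply_of_mem_weylGroup hu] at h_sq
    linarith [sq_nonneg (u d i - 1)]
  obtain ⟨n, ⟨w, hw, hwn⟩, h_greatest⟩ :=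
    Int.exists_greatest_of_bdd (P := fun n ↦ ∃ u ∈ weylGroup, 2 * u d i = n)
      ⟨⌊d ⬝ᵥ d + 1⌋, fun n ⟨u, hu, hn⟩ ↦ Int.le_floor.2 (hn ▸ h_bound u hu)⟩
      ((h_int 1 (one_mem _)).imp fun n hn ↦ ⟨1, one_mem _, hn⟩)
  refine ⟨w, hw, fun u hu ↦ ?_⟩
  obtain ⟨m, hm⟩ := h_int u hu
  have h_le : (m : ℝ) ≤ n := by exact_mod_cast h_greatest m ⟨u, hu, hm⟩
  linarith

theorem exists_mem_weylGroup_apply_add_eq_single (hp : isRoot p) (hq : isRoot q)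
    (hpq : p ⬝ᵥ q = 0) : ∃ w ∈ weylGroup, w (p + q) = Pi.single 0 2 := by
  have h_lattice : ∀ u ∈ weylGroup, u (p + q) ∈ e8Lattice := fun u hu ↦ by
    rw [map_add]
    exact add_mem (isRoot_apply_of_mem_weylGroup hu hp).mem_e8Lattice
      (isRoot_apply_of_mem_weylGroup hu hq).mem_e8Lattice
  obtain ⟨w, hw, h_max⟩ := exists_mem_weylGroup_forall_apply_le h_lattice 0
  refine ⟨w, hw, eq_single_of_forall_isRoot (h_lattice w hw) ?_ fun r hr hr0 ↦ ?_⟩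
  · rw [dotProduct_apply_of_mem_weylGroup hw, add_dotProduct, dotProduct_add, dotProduct_add,
      dotProduct_comm q p, hpq, hp.dotProduct_self, hq.dotProduct_self]
    norm_num
  · have h_le := h_max _ (mul_mem hr.dotReflection_mem_weylGroup hw)
    rw [LinearEquiv.mul_apply, dotReflection_apply, Pi.sub_apply, Pi.smul_apply, smul_eq_mul,
      sub_le_self_iff] at h_le
    exact nonneg_of_mul_nonneg_left h_le hr0

theorem isRoot.card_support_le_two (hx : isRoot x) {i : Fin 8} (hi : ∃ n : ℤ, x i = n) :
    Finset.card {i | x i ≠ 0} ≤ 2 := by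
  have h_int : ∀ i, ∃ n : ℤ, x i = n := by
    refine hx.1.1.resolve_right fun h_half ↦ ?_
    obtain ⟨m, hm⟩ := h_half i
    obtain ⟨n, hn⟩ := hi
    have h_eq : 2 * n = 2 * m + 1 := by
      have : (2 * n : ℝ) = 2 * m + 1 := by linarith
      exact_mod_cast this
    lia
  exact_mod_cast (card_support_le_dotProduct_self h_int).trans_eq hx.dotProduct_self

theorem exists_forall_apply_eq_zero {T : Finset (Fin 8 → ℝ)} (hT : T.card ≤ 3) {i : Fin 8}
    (h_roots : ∀ x ∈ T, isRoot x) (h_int : ∀ x ∈ T, ∃ n : ℤ, x i = n) :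
    ∃ j, ∀ x ∈ T, x j = 0 := by
  have h_card : (T.biUnion fun x ↦ {k | x k ≠ 0}).card < (Finset.univ : Finset (Fin 8)).card :=
    calc (T.biUnion fun x ↦ {k | x k ≠ 0}).card
        ≤ T.card * 2 := Finset.card_biUnion_le_card_mul _ _ _ fun x hx ↦
          (h_roots x hx).card_support_le_two (h_int x hx)
      _ < 8 := by lia
  obtain ⟨j, -, hj⟩ := Finset.exists_mem_notMem_of_card_lt_card h_card
  exact ⟨j, by simpa using hj⟩

theorem exists_isRoot_forall_dotProduct_eq_apply_add {w : (Fin 8 → ℝ) ≃ₗ[ℝ] (Fin 8 → ℝ)}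
    (hw : w ∈ weylGroup) {i j : Fin 8} (hij : i ≠ j) :
    ∃ r, isRoot r ∧ ∀ x, r ⬝ᵥ x = w x i + w x j := by
  refine ⟨_, isRoot_apply_of_mem_weylGroup (inv_mem hw) (isRoot_single_add_single hij),
    fun x ↦ ?_⟩
  rw [← dotProduct_apply_of_mem_weylGroup hw, LinearEquiv.coe_inv, LinearEquiv.apply_symm_apply,
    add_dotProduct, single_one_dotProduct, single_one_dotProduct]

theorem exists_isRoot_dotProduct_eq_one (hp : isRoot p) (hq : isRoot q) (hpq : p ⬝ᵥ q = 0)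
    {S : Finset (Fin 8 → ℝ)} (hS : S.card ≤ 2) (h_roots : ∀ e ∈ S, isRoot e)
    (h_orthogonal : ∀ e ∈ S, (p + q) ⬝ᵥ e = 0) :
    ∃ r, isRoot r ∧ r ⬝ᵥ p = 1 ∧ r ⬝ᵥ q = 1 ∧ ∀ e ∈ S, r ⬝ᵥ e = 0 := by
  obtain ⟨w, hw, hw_add⟩ := exists_mem_weylGroup_apply_add_eq_single hp hq hpq
  have h_zero (x) : w x 0 = (p + q) ⬝ᵥ x / 2 := by
    rw [← dotProduct_apply_of_mem_weylGroup hw, hw_add, single_dotProduct]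
    ring
  have hp0 : w p 0 = 1 := by
    rw [h_zero, add_dotProduct, dotProduct_comm q, hpq, hp.dotProduct_self]
    norm_num
  have hq0 : w q 0 = 1 := by
    rw [h_zero, add_dotProduct, hpq, hq.dotProduct_self]
    norm_num
  have hS0 (e) (he : e ∈ S) : w e 0 = 0 := by rw [h_zero, h_orthogonal e he, zero_div]
  obtain ⟨j, hj⟩ := exists_forall_apply_eq_zero (T := insert (w p) (S.image w)) (i := 0)
    ((Finset.card_insert_le _ _).trans (by grind [Finset.card_image_le (s := S) (f := w)]))
    (by simpa using ⟨isRoot_apply_of_mem_weylGroup hw hp,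
      fun e he ↦ isRoot_apply_of_mem_weylGroup hw (h_roots e he)⟩)
    (by simpa using ⟨⟨1, by simpa using hp0⟩, fun e he ↦ ⟨0, by simpa using hS0 e he⟩⟩)
  simp only [Finset.forall_mem_insert, Finset.forall_mem_image] at hj
  obtain ⟨hpj, hSj⟩ := hj
  have hj0 : (0 : Fin 8) ≠ j := by
    rintro rfl
    exact one_ne_zero (hp0.symm.trans hpj)
  have hqj : w q j = 0 := by
    have := congrFun hw_add j
    rwa [map_add, Pi.add_apply, hpj, zero_add, Pi.single_eq_of_ne hj0.symm] at this
  obtain ⟨r, hr, h_dot⟩ := exists_isRoot_forall_dotProduct_eq_apply_add hw hj0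
  refine ⟨r, hr, ?_, ?_, fun e he ↦ ?_⟩
  · rw [h_dot, hp0, hpj, add_zero]
  · rw [h_dot, hq0, hqj, add_zero]
  · rw [h_dot, hS0 e he, hSj he, add_zero]

end NormFour

section Stabilizer

variable {e e₁ e₂ f g s : Fin 8 → ℝ} {S : Set (Fin 8 → ℝ)} {w : (Fin 8 → ℝ) ≃ₗ[ℝ] (Fin 8 → ℝ)}

/-- The pointwise stabilizer of a set `S` of vectors in the Weyl group. -/
def weylFixing (S : Set (Fin 8 → ℝ)) : Subgroup ((Fin 8 → ℝ) ≃ₗ[ℝ] (Fin 8 → ℝ)) :=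
  weylGroup ⊓ fixingSubgroup _ S

theorem mem_weylFixing_iff : w ∈ weylFixing S ↔ w ∈ weylGroup ∧ ∀ e ∈ S, w e = e := by
  rw [weylFixing, Subgroup.mem_inf, mem_fixingSubgroup_iff]
  rfl

theorem isRoot.dotReflection_mem_weylFixing (hs : isRoot s) (h : ∀ e ∈ S, s ⬝ᵥ e = 0) :
    _root_.dotReflection s hs.dotProduct_self ∈ weylFixing S :=
  mem_weylFixing_iff.2 ⟨hs.dotReflection_mem_weylGroup, fun e he ↦
    dotReflection_apply_of_dotProduct_eq_zero _ (h e he)⟩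

theorem exists_mem_weylFixing_of_dotProduct_eq_one (hf : isRoot f) (hg : isRoot g)
    (hfg : f ⬝ᵥ g = 1) (hS : ∀ e ∈ S, f ⬝ᵥ e = g ⬝ᵥ e) : ∃ w ∈ weylFixing S, w f = g := by
  refine ⟨_, (hf.sub hg hfg).dotReflection_mem_weylFixing fun e he ↦ ?_, ?_⟩
  · rw [sub_dotProduct, hS e he, sub_self]
  · rw [dotReflection_apply, sub_dotProduct, hf.dotProduct_self, dotProduct_comm g, hfg]
    norm_num

theorem exists_mem_weylFixing_of_dotProduct_eq_zero {S : Finset (Fin 8 → ℝ)} (hf : isRoot f)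
    (hg : isRoot g) (hfg : f ⬝ᵥ g = 0) (h_card : S.card ≤ 2) (h_roots : ∀ e ∈ S, isRoot e)
    (hS : ∀ e ∈ S, f ⬝ᵥ e = g ⬝ᵥ e) : ∃ w ∈ weylFixing S, w f = g := by
  obtain ⟨s, hs, hsf, hsg, hsS⟩ := exists_isRoot_dotProduct_eq_one hf hg.neg
    (by rw [dotProduct_neg, hfg, neg_zero]) h_card h_roots
    fun e he ↦ by rw [← sub_eq_add_neg, sub_dotProduct, hS e he, sub_self]
  rw [dotProduct_neg] at hsg
  have hs_apply : dotReflection s hs.dotProduct_self f = f - s := by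
    rw [dotReflection_apply, hsf, one_smul]
  obtain ⟨w, hw, hwg⟩ := exists_mem_weylFixing_of_dotProduct_eq_one (S := S)
    (hs_apply ▸ hs.dotReflection hf) hg (by rw [sub_dotProduct, hfg]; linarith)
    fun e he ↦ by rw [sub_dotProduct, hsS e he, sub_zero, hS e he]
  refine ⟨_, mul_mem hw (hs.dotReflection_mem_weylFixing hsS), ?_⟩
  rw [LinearEquiv.mul_apply, hs_apply, hwg]

theorem exists_mem_weylFixing_of_orthogonal {S : Finset (Fin 8 → ℝ)} (hf : isRoot f)
    (hg : isRoot g) (h_card : S.card ≤ 2) (h_roots : ∀ e ∈ S, isRoot e)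
    (hfS : ∀ e ∈ S, f ⬝ᵥ e = 0) (hgS : ∀ e ∈ S, g ⬝ᵥ e = 0) :
    ∃ w ∈ weylFixing S, w f = g := by
  have hS : ∀ e ∈ S, f ⬝ᵥ e = g ⬝ᵥ e := fun e he ↦ (hfS e he).trans (hgS e he).symm
  rcases hf.dotProduct_mem hg with hfg | hfg | hfg | hfg | hfg
  · refine ⟨_, hf.dotReflection_mem_weylFixing hfS, ?_⟩
    rw [dotReflection_apply, hf.dotProduct_self, hf.eq_neg_of_dotProduct_eq_neg_two hg hfg]
    module
  · have h_add := hf.add hg hfg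
    obtain ⟨u, hu, huf⟩ := exists_mem_weylFixing_of_dotProduct_eq_one (S := S) hf h_add
      (by rw [dotProduct_add, hf.dotProduct_self, hfg]; norm_num)
      fun e he ↦ by rw [add_dotProduct, hgS e he, add_zero]
    obtain ⟨w, hw, hwg⟩ := exists_mem_weylFixing_of_dotProduct_eq_one (S := S) h_add hg
      (by rw [add_dotProduct, hg.dotProduct_self, hfg]; norm_num)
      fun e he ↦ by rw [add_dotProduct, hfS e he, zero_add]
    exact ⟨w * u, mul_mem hw hu, by rw [LinearEquiv.mul_apply, huf, hwg]⟩
  · exact exists_mem_weylFixing_of_dotProduct_eq_zero hf hg hfg h_card h_roots hS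
  · exact exists_mem_weylFixing_of_dotProduct_eq_one hf hg hfg hS
  · exact ⟨1, one_mem _, hf.eq_of_dotProduct_eq_two hg hfg⟩

theorem dotReflection_add_apply_eq_neg (hf : isRoot f) (hg : isRoot g) (he : isRoot e)
    (hfg : f ⬝ᵥ g = -1) (h_eq : f ⬝ᵥ e = g ⬝ᵥ e) (h_ne : f ⬝ᵥ e ≠ 0) :
    dotReflection (f + g) (hf.add hg hfg).dotProduct_self e = -e := by
  have h_add := hf.add hg hfg
  have h_two_mul : (f + g) ⬝ᵥ e = 2 * f ⬝ᵥ e := by rw [add_dotProduct, ← h_eq, two_mul]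
  have h_le := h_add.dotProduct_le_two he
  have h_ge := h_add.dotProduct_le_two he.neg
  rw [dotProduct_neg] at h_ge
  have h_two_or : (f + g) ⬝ᵥ e = 2 ∨ (f + g) ⬝ᵥ e = -2 := by
    rcases hf.dotProduct_mem he with h | h | h | h | h
    · linarith
    · right; linarith
    · exact absurd h h_ne
    · left; linarith
    · linarith [h.symm]
  rw [dotReflection_apply]
  rcases h_two_or with h | h
  · rw [h, h_add.eq_of_dotProduct_eq_two he h]
    module
  · rw [h, h_add.eq_neg_of_dotProduct_eq_neg_two he h]
    module

theorem exists_mem_weylFixing_pair_of_dotProduct_eq_neg_one (hf : isRoot f) (hg : isRoot g)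
    (he₁ : isRoot e₁) (he₂ : isRoot e₂) (hfg : f ⬝ᵥ g = -1) (h₁ : f ⬝ᵥ e₁ = g ⬝ᵥ e₁)
    (h₂ : f ⬝ᵥ e₂ = g ⬝ᵥ e₂) (h_ne : f ⬝ᵥ e₁ ≠ 0) : ∃ w ∈ weylFixing {e₁, e₂}, w f = g := by
  have h_add := hf.add hg hfg
  let u := LinearEquiv.neg ℝ * dotReflection (f + g) h_add.dotProduct_self
  have hu : u ∈ weylGroup := mul_mem neg_mem_weylGroup h_add.dotReflection_mem_weylGroup
  have hu_apply (x) : u x = -dotReflection (f + g) h_add.dotProduct_self x := rfl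
  have huf : u f = g := by
    rw [hu_apply, dotReflection_apply, add_dotProduct, hf.dotProduct_self, dotProduct_comm g, hfg]
    module
  have hu_fix (e) (he : isRoot e) (h : f ⬝ᵥ e = g ⬝ᵥ e) (hfe : f ⬝ᵥ e ≠ 0) : u e = e := by
    rw [hu_apply, dotReflection_add_apply_eq_neg hf hg he hfg h hfe, neg_neg]
  have hu₁ := hu_fix e₁ he₁ h₁ h_ne
  by_cases hfe₂ : f ⬝ᵥ e₂ = 0
  · have hge₂ : g ⬝ᵥ e₂ = 0 := h₂.symm.trans hfe₂
    have hu₂ : u e₂ = -e₂ := by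
      rw [hu_apply, dotReflection_apply_of_dotProduct_eq_zero _
        (by rw [add_dotProduct, hfe₂, hge₂, add_zero])]
    have h_orthogonal : e₂ ⬝ᵥ e₁ = 0 := by
      have h := dotProduct_apply_of_mem_weylGroup hu e₂ e₁
      rw [hu₁, hu₂, neg_dotProduct] at h
      linarith
    refine ⟨dotReflection e₂ he₂.dotProduct_self * u, mem_weylFixing_iff.2
      ⟨mul_mem he₂.dotReflection_mem_weylGroup hu, ?_⟩, ?_⟩
    · rintro e (rfl | rfl)
      · rw [LinearEquiv.mul_apply, hu₁, dotReflection_apply_of_dotProduct_eq_zero _ h_orthogonal]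
      · rw [LinearEquiv.mul_apply, hu₂, map_neg, dotReflection_apply, he₂.dotProduct_self]
        module
    · rw [LinearEquiv.mul_apply, huf,
        dotReflection_apply_of_dotProduct_eq_zero _ ((dotProduct_comm _ _).trans hge₂)]
  · refine ⟨u, mem_weylFixing_iff.2 ⟨hu, ?_⟩, huf⟩
    rintro e (rfl | rfl)
    · exact hu₁
    · exact hu_fix e he₂ h₂ hfe₂

theorem exists_mem_weylFixing_pair (hf : isRoot f) (hg : isRoot g)
    (he₁ : isRoot e₁) (he₂ : isRoot e₂) (h₁ : f ⬝ᵥ e₁ = g ⬝ᵥ e₁) (h₂ : f ⬝ᵥ e₂ = g ⬝ᵥ e₂) :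
    ∃ w ∈ weylFixing {e₁, e₂}, w f = g := by
  classical
  have h_roots : ∀ e ∈ ({e₁, e₂} : Finset (Fin 8 → ℝ)), isRoot e := by simp [he₁, he₂]
  have h_orthogonal (hf₁ : f ⬝ᵥ e₁ = 0) (hf₂ : f ⬝ᵥ e₂ = 0) :
      ∃ w ∈ weylFixing {e₁, e₂}, w f = g := by
    simpa using exists_mem_weylFixing_of_orthogonal hf hg Finset.card_le_two h_roots
      (by simp [hf₁, hf₂]) (by simp [← h₁, ← h₂, hf₁, hf₂])
  rcases hf.dotProduct_mem hg with hfg | hfg | hfg | hfg | hfg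
  · have hf_eq := hf.eq_neg_of_dotProduct_eq_neg_two hg hfg
    have h_zero (e) (h : f ⬝ᵥ e = g ⬝ᵥ e) : f ⬝ᵥ e = 0 := by
      rw [hf_eq, neg_dotProduct] at h ⊢
      linarith
    exact h_orthogonal (h_zero e₁ h₁) (h_zero e₂ h₂)
  · by_cases hf₁ : f ⬝ᵥ e₁ = 0
    · by_cases hf₂ : f ⬝ᵥ e₂ = 0
      · exact h_orthogonal hf₁ hf₂
      · rw [Set.pair_comm]
        exact exists_mem_weylFixing_pair_of_dotProduct_eq_neg_one hf hg he₂ he₁ hfg h₂ h₁ hf₂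
    · exact exists_mem_weylFixing_pair_of_dotProduct_eq_neg_one hf hg he₁ he₂ hfg h₁ h₂ hf₁
  · simpa using exists_mem_weylFixing_of_dotProduct_eq_zero hf hg hfg Finset.card_le_two h_roots
      (by simp [h₁, h₂])
  · exact exists_mem_weylFixing_of_dotProduct_eq_one hf hg hfg (by simp [h₁, h₂])
  · exact ⟨1, one_mem _, hf.eq_of_dotProduct_eq_two hg hfg⟩

theorem exists_mem_weylGroup_apply_eq (hw : w ∈ weylGroup) (hf : isRoot f) (hg : isRoot g)
    (he₁ : isRoot e₁) (he₂ : isRoot e₂) (h₁ : e₁ ⬝ᵥ f = w e₁ ⬝ᵥ g) (h₂ : e₂ ⬝ᵥ f = w e₂ ⬝ᵥ g) :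
    ∃ u ∈ weylGroup, u e₁ = w e₁ ∧ u e₂ = w e₂ ∧ u f = g := by
  have h_eq (e) (h : e ⬝ᵥ f = w e ⬝ᵥ g) : w f ⬝ᵥ w e = g ⬝ᵥ w e := by
    rw [dotProduct_apply_of_mem_weylGroup hw, dotProduct_comm, h, dotProduct_comm]
  obtain ⟨v, hv, hvg⟩ := exists_mem_weylFixing_pair (isRoot_apply_of_mem_weylGroup hw hf) hg
    (isRoot_apply_of_mem_weylGroup hw he₁) (isRoot_apply_of_mem_weylGroup hw he₂)
    (h_eq e₁ h₁) (h_eq e₂ h₂)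
  obtain ⟨hv, h_fix⟩ := mem_weylFixing_iff.1 hv
  exact ⟨v * w, mul_mem hv hw, h_fix _ (by simp), h_fix _ (by simp), hvg⟩

end Stabilizer

/-- For all `a, b, c ∈ {-2,-1,0,1}`, the Weyl group acts transitively on
the set of ordered triples of roots `(e1,e2,e3)` with `e1·e2 = a`, `e2·e3 = b`,
`e1·e3 = c`, whenever this set is nonempty. -/
theorem stmt_2 (a b c : ℝ)
    (ha : a ∈ ({-2, -1, 0, 1} : Set ℝ))
    (hb : b ∈ ({-2, -1, 0, 1} : Set ℝ))
    (hc : c ∈ ({-2, -1, 0, 1} : Set ℝ))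
    (e1 e2 e3 f1 f2 f3 : Fin 8 → ℝ)
    (he1 : isRoot e1) (he2 : isRoot e2) (he3 : isRoot e3)
    (hf1 : isRoot f1) (hf2 : isRoot f2) (hf3 : isRoot f3)
    (hde12 : dot e1 e2 = a) (hde23 : dot e2 e3 = b) (hde13 : dot e1 e3 = c)
    (hdf12 : dot f1 f2 = a) (hdf23 : dot f2 f3 = b) (hdf13 : dot f1 f3 = c) :
    ∃ w : (Fin 8 → ℝ) ≃ₗ[ℝ] (Fin 8 → ℝ),
      IsWeyl w ∧ w e1 = f1 ∧ w e2 = f2 ∧ w e3 = f3 := by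
  obtain ⟨u, hu, rfl⟩ := exists_mem_weylFixing_of_orthogonal (S := ∅) he1 hf1
    (by simp) (by simp) (by simp) (by simp)
  replace hu := (mem_weylFixing_iff.1 hu).1
  have h12 : e1 ⬝ᵥ e2 = u e1 ⬝ᵥ f2 := hde12.trans hdf12.symm
  obtain ⟨v, hv, hv1, -, rfl⟩ := exists_mem_weylGroup_apply_eq hu he2 hf2 he1 he1 h12 h12
  have h13 : e1 ⬝ᵥ e3 = v e1 ⬝ᵥ f3 := hv1 ▸ hde13.trans hdf13.symm
  have h23 : e2 ⬝ᵥ e3 = v e2 ⬝ᵥ f3 := hde23.trans hdf23.symm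
  obtain ⟨w, hw, hw1, hw2, hw3⟩ := exists_mem_weylGroup_apply_eq hv he3 hf3 he1 he2 h13 h23
  exact ⟨w, hw, hw1.trans hv1, hw2, hw3⟩
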